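/- For every real α with 0 < α < 1/2 and every integer n ≥ 2, the chain of strict inequalities d_{n−1}(α) > d_n(α) > (1/2)·d_{n−1}(α) > 0 holds. -/

import Mathlib

/-- `dpoly n α = ∑_{m=0}^{⌊n/2⌋} (-1)^m C(n-m, m) α^(2m)`. -/
noncomputable def dpoly (n : ℕ) (α : ℝ) : ℝ :=
  ∑ m ∈ Finset.range (n / 2 + 1), (-1 : ℝ) ^ m * (Nat.choose (n - m) m : ℝ) * α ^ (2 * m)

/-!
Pascal's rule along the antidiagonals gives `d_{n+2} = d_{n+1} - α² d_n`. For any recurrence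
`u_{n+2} = u_{n+1} - c u_n`, a ratio bound `u_{n+1} > r u_n` propagates as soon as `c ≤ r (1 - r)`;
the best choice `r = 1/2` covers `α² ≤ 1/4`. Once all `d_n` are positive, the recurrence also gives
the strict decrease.
-/

open Finset

theorem sum_antidiagonal_choose_mul_pow_add_two {R : Type*} [Semiring R] (x : R) (n : ℕ) :
    ∑ p ∈ antidiagonal (n + 2), (p.1.choose p.2 : R) * x ^ p.2 =
      ∑ p ∈ antidiagonal (n + 1), (p.1.choose p.2 : R) * x ^ p.2 +
        (∑ p ∈ antidiagonal n, (p.1.choose p.2 : R) * x ^ p.2) * x := by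
  have hpascal (k m : ℕ) : ((k + 1).choose (m + 1) : R) * x ^ (m + 1) =
      (k.choose (m + 1) : R) * x ^ (m + 1) + (k.choose m : R) * x ^ m * x := by
    rw [Nat.choose_succ_succ', Nat.cast_add, add_mul, add_comm, pow_succ, mul_assoc _ _ x]
  rw [Nat.antidiagonal_succ_succ', Nat.antidiagonal_succ']
  simp [hpascal, sum_add_distrib, sum_mul, add_assoc]

theorem pos_and_mul_lt_succ_of_recurrence {R : Type*} [CommRing R] [PartialOrder R]
    [IsStrictOrderedRing R] {u : ℕ → R} {c r : R} (hr0 : 0 ≤ r) (hr1 : r < 1)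
    (hc : c ≤ r * (1 - r)) (hu : ∀ n, u (n + 2) = u (n + 1) - c * u n)
    (h0 : 0 < u 0) (h1 : r * u 0 < u 1) (n : ℕ) :
    0 < u n ∧ r * u n < u (n + 1) := by
  induction n with
  | zero => exact ⟨h0, h1⟩
  | succ n ih =>
    obtain ⟨hpos, hratio⟩ := ih
    refine ⟨(mul_nonneg hr0 hpos.le).trans_lt hratio, ?_⟩
    have hgap : c * u n < (1 - r) * u (n + 1) :=
      calc c * u n ≤ r * (1 - r) * u n := mul_le_mul_of_nonneg_right hc hpos.le
        _ = (1 - r) * (r * u n) := by ring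
        _ < (1 - r) * u (n + 1) := mul_lt_mul_of_pos_left hratio (sub_pos.mpr hr1)
    rw [hu, lt_sub_comm]
    rwa [sub_mul, one_mul] at hgap

theorem dpoly_eq_sum_antidiagonal (n : ℕ) (α : ℝ) :
    dpoly n α = ∑ p ∈ antidiagonal n, (p.1.choose p.2 : ℝ) * (-α ^ 2) ^ p.2 := by
  rw [← Nat.sum_antidiagonal_swap, Nat.sum_antidiagonal_eq_sum_range_succ_mk]
  have hsubset : range (n / 2 + 1) ⊆ range (n + 1) :=
    range_subset_range.mpr (Nat.succ_le_succ (Nat.div_le_self n 2))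
  refine Eq.trans (sum_congr rfl fun m _ ↦ ?_) (sum_subset hsubset fun m _ hm ↦ ?_)
  · rw [Prod.fst_swap, Prod.snd_swap, neg_pow (α ^ 2), ← pow_mul]
    ring
  · have hlt : n - m < m := by
      rw [mem_range] at hm
      omega
    rw [Prod.fst_swap, Prod.snd_swap, Nat.choose_eq_zero_of_lt hlt, Nat.cast_zero, zero_mul]

theorem dpoly_add_two (n : ℕ) (α : ℝ) :
    dpoly (n + 2) α = dpoly (n + 1) α - α ^ 2 * dpoly n α := by
  simp only [dpoly_eq_sum_antidiagonal, sum_antidiagonal_choose_mul_pow_add_two]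
  ring

theorem dpoly_zero (α : ℝ) : dpoly 0 α = 1 := by simp [dpoly]

theorem dpoly_one (α : ℝ) : dpoly 1 α = 1 := by simp [dpoly]

theorem dpoly_pos_and_half_mul_lt_dpoly_succ {α : ℝ} (hα : |α| ≤ 1 / 2) (n : ℕ) :
    0 < dpoly n α ∧ 1 / 2 * dpoly n α < dpoly (n + 1) α := by
  have hsq : α ^ 2 ≤ 1 / 2 * (1 - 1 / 2) :=
    (sq_le_sq.mpr (hα.trans (le_abs_self _))).trans_eq (by norm_num)
  refine pos_and_mul_lt_succ_of_recurrence (u := fun k ↦ dpoly k α) ?_ ?_ hsq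
    (dpoly_add_two · α) ?_ ?_ n <;> norm_num [dpoly_zero, dpoly_one]

theorem dpoly_pos {α : ℝ} (hα : |α| ≤ 1 / 2) (n : ℕ) : 0 < dpoly n α :=
  (dpoly_pos_and_half_mul_lt_dpoly_succ hα n).1

theorem half_mul_dpoly_lt_dpoly_succ {α : ℝ} (hα : |α| ≤ 1 / 2) (n : ℕ) :
    1 / 2 * dpoly n α < dpoly (n + 1) α :=
  (dpoly_pos_and_half_mul_lt_dpoly_succ hα n).2

theorem dpoly_add_two_lt_dpoly_succ {α : ℝ} (hα0 : α ≠ 0) (hα : |α| ≤ 1 / 2) (n : ℕ) :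
    dpoly (n + 2) α < dpoly (n + 1) α := by
  rw [dpoly_add_two]
  exact sub_lt_self _ (mul_pos (sq_pos_of_ne_zero hα0) (dpoly_pos hα n))

theorem stmt7_general (α : ℝ) (hα0 : α ≠ 0) (hα : |α| ≤ 1 / 2) (n : ℕ) (hn : 2 ≤ n) :
    dpoly (n - 1) α > dpoly n α ∧ dpoly n α > (1 / 2) * dpoly (n - 1) α ∧
      (1 / 2) * dpoly (n - 1) α > 0 := by
  obtain ⟨k, rfl⟩ := Nat.exists_eq_add_of_le' hn
  exact ⟨dpoly_add_two_lt_dpoly_succ hα0 hα k, half_mul_dpoly_lt_dpoly_succ hα (k + 1),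
    mul_pos one_half_pos (dpoly_pos hα (k + 1))⟩

theorem stmt7 (α : ℝ) (hα0 : 0 < α) (hα1 : α < 1 / 2) (n : ℕ) (hn : 2 ≤ n) :
    dpoly (n - 1) α > dpoly n α ∧ dpoly n α > (1 / 2) * dpoly (n - 1) α ∧
      (1 / 2) * dpoly (n - 1) α > 0 :=
  stmt7_general α hα0.ne' ((abs_of_pos hα0).trans_le hα1.le) n hn
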